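/- Let n ≥ 1 and let Φₙ ∈ ℤ[x] be the n-th cyclotomic polynomial, evaluated on quaternions. Then its quaternionic Mahler measure is: m_ℍ(Φₙ) = (1/4)·möb(n) if n is odd; m_ℍ(Φₙ) = (1/4)·möb(n/2) if n ≡ 2 (mod 4); and m_ℍ(Φₙ) = (1/2)·möb(n/2) if 4 | n, where möb denotes the Möbius function. -/

import Mathlib

open MeasureTheory Quaternion

noncomputable instance : MeasurableSpace (Quaternion ℝ) := borel _
instance : BorelSpace (Quaternion ℝ) := ⟨rfl⟩
instance : Nonempty (Metric.sphere (0 : Quaternion ℝ) 1) := ⟨⟨1, by simp⟩⟩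

/-- The probability Haar measure `μ` on the group `T¹(ℍ)` of unit quaternions
(the Haar measure normalized so that the whole group has measure `1`). -/
noncomputable def muH : Measure (Metric.sphere (0 : Quaternion ℝ) 1) :=
  Measure.haarMeasure ⊤

/-- The quaternionic Mahler measure `m_ℍ(f) = ∫_{T¹(ℍ)} log |f(q)| dμ(q)`. -/
noncomputable def mahlerH (f : Quaternion ℝ → Quaternion ℝ) : ℝ :=
  ∫ q : Metric.sphere (0 : Quaternion ℝ) 1, Real.log ‖f q‖ ∂muH

instance : IsProbabilityMeasure muH := ⟨Measure.haarMeasure_self⟩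
instance : muH.IsMulLeftInvariant := inferInstanceAs (Measure.haarMeasure ⊤).IsMulLeftInvariant

theorem abs_re_le_norm (q : ℍ[ℝ]) : |q.re| ≤ ‖q‖ := by
  refine abs_le_of_sq_le_sq ?_ (norm_nonneg q)
  rw [sq ‖q‖, ← Quaternion.normSq_eq_norm_mul_self, Quaternion.normSq_def']
  nlinarith [sq_nonneg q.imI, sq_nonneg q.imJ, sq_nonneg q.imK]

theorem continuous_re_mul_coe (u : ℍ[ℝ]) :
    Continuous fun q : Metric.sphere (0 : ℍ[ℝ]) 1 => (u * (q : ℍ[ℝ])).re :=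
  Quaternion.continuous_re.comp (by fun_prop)

/-- Infinitesimal invariance of `muH` under the one-parameter group generated by `u`. -/
theorem integral_re_pow_mul_re_sq {u : ℍ[ℝ]} (hu : u * u = -1) (hu0 : u.re = 0) (k : ℕ) :
    k * ∫ q : Metric.sphere (0 : ℍ[ℝ]) 1, (q : ℍ[ℝ]).re ^ (k - 1) * (u * (q : ℍ[ℝ])).re ^ 2 ∂muH =
      ∫ q : Metric.sphere (0 : ℍ[ℝ]) 1, (q : ℍ[ℝ]).re ^ (k + 1) ∂muH := by
  have hu1 : ‖u‖ = 1 := by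
    have := congrArg norm hu
    rw [norm_mul, norm_neg, norm_one] at this
    nlinarith [norm_nonneg u]
  let e (s : ℝ) : ℍ[ℝ] := Real.cos s • 1 + Real.sin s • u
  have he (s : ℝ) : e s ∈ Metric.sphere (0 : ℍ[ℝ]) 1 := by
    have h1 : Quaternion.normSq u = 1 := by rw [Quaternion.normSq_eq_norm_mul_self, hu1, one_mul]
    have h2 : ‖e s‖ * ‖e s‖ = 1 := by
      rw [Quaternion.normSq_def', hu0] at h1
      rw [← Quaternion.normSq_eq_norm_mul_self, Quaternion.normSq_def']
      simp only [e, Quaternion.re_add, Quaternion.re_smul, Quaternion.re_one, hu0,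
        Quaternion.imI_add, Quaternion.imI_smul, Quaternion.imI_one,
        Quaternion.imJ_add, Quaternion.imJ_smul, Quaternion.imJ_one,
        Quaternion.imK_add, Quaternion.imK_smul, Quaternion.imK_one, smul_eq_mul]
      linear_combination Real.sin s ^ 2 * h1 + Real.sin_sq_add_cos_sq s
    rw [mem_sphere_zero_iff_norm]
    nlinarith [norm_nonneg (e s)]
  let x (q : Metric.sphere (0 : ℍ[ℝ]) 1) : ℝ := (q : ℍ[ℝ]).re
  let y (q : Metric.sphere (0 : ℍ[ℝ]) 1) : ℝ := (u * (q : ℍ[ℝ])).re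
  have hx : Continuous x := Quaternion.continuous_re.comp continuous_subtype_val
  have hy : Continuous y := continuous_re_mul_coe u
  have hxb (q) : |x q| ≤ 1 := by simpa using abs_re_le_norm (q : ℍ[ℝ])
  have hyb (q) : |y q| ≤ 1 :=
    (abs_re_le_norm (u * (q : ℍ[ℝ]))).trans_eq (by
      rw [norm_mul, hu1, norm_eq_of_mem_sphere, one_mul])
  have hxe (s : ℝ) (q) : x (⟨e s, he s⟩ * q) = Real.cos s * x q + Real.sin s * y q := by
    change (e s * (q : ℍ[ℝ])).re = _
    simp only [x, y, e, add_mul, smul_mul_assoc, one_mul, Quaternion.re_add, Quaternion.re_smul,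
      smul_eq_mul]
  have hye (s : ℝ) (q) : y (⟨e s, he s⟩ * q) = Real.cos s * y q - Real.sin s * x q := by
    change (u * (e s * (q : ℍ[ℝ]))).re = _
    simp only [x, y, e, ← mul_assoc, mul_add, mul_smul_comm, mul_one, hu]
    simp only [add_mul, smul_mul_assoc, neg_mul, one_mul, Quaternion.re_add,
      Quaternion.re_smul, Quaternion.re_neg, smul_eq_mul, mul_neg, sub_eq_add_neg]
  have hinv (s : ℝ) : ∫ q, (Real.cos s * x q + Real.sin s * y q) ^ k *
      (Real.cos s * y q - Real.sin s * x q) ∂muH = ∫ q, x q ^ k * y q ∂muH := by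
    simp only [← hxe, ← hye]
    exact integral_mul_left_eq_self (fun q => x q ^ k * y q) _
  have hint {φ : Metric.sphere (0 : ℍ[ℝ]) 1 → ℝ} (hφ : Continuous φ) : Integrable φ muH :=
    hφ.integrable_of_hasCompactSupport (HasCompactSupport.of_compactSpace φ)
  have hderiv := (hasDerivAt_integral_of_dominated_loc_of_deriv_le (μ := muH) (s := Set.univ)
    (x₀ := (0 : ℝ)) (bound := fun _ => (k : ℝ) + 1)
    (F := fun s q => (Real.cos s * x q + Real.sin s * y q) ^ k *
      (Real.cos s * y q - Real.sin s * x q))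
    (F' := fun s q => k * ((Real.cos s * x q + Real.sin s * y q) ^ (k - 1) *
      (Real.cos s * y q - Real.sin s * x q) ^ 2) -
      (Real.cos s * x q + Real.sin s * y q) ^ (k + 1))
    Filter.univ_mem (.of_forall fun s => Continuous.aestronglyMeasurable (by fun_prop))
    (hint (by fun_prop)) (Continuous.aestronglyMeasurable (by fun_prop)) ?_
    (integrable_const _) ?_).2
  · simp only [hinv, Real.cos_zero, Real.sin_zero, one_mul, zero_mul, add_zero, sub_zero]
      at hderiv
    have := hderiv.unique (hasDerivAt_const _ _)
    rw [integral_sub (hint (by fun_prop)) (hint (by fun_prop)), integral_const_mul, sub_eq_zero]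
      at this
    exact this
  · refine .of_forall fun q s _ => ?_
    rw [← hxe, ← hye]
    refine (norm_sub_le _ _).trans (add_le_add ?_ ?_)
    · rw [norm_mul, norm_mul, norm_pow, norm_pow, Real.norm_natCast]
      exact mul_le_of_le_one_right (by positivity)
        (mul_le_one₀ (pow_le_one₀ (norm_nonneg _) (hxb _)) (by positivity)
          (pow_le_one₀ (norm_nonneg _) (hyb _)))
    · rw [norm_pow]
      exact pow_le_one₀ (norm_nonneg _) (hxb _)
  · refine .of_forall fun q s _ => ?_
    have dX : HasDerivAt (fun s => Real.cos s * x q + Real.sin s * y q)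
        (Real.cos s * y q - Real.sin s * x q) s :=
      (((Real.hasDerivAt_cos s).mul_const _).add ((Real.hasDerivAt_sin s).mul_const _)).congr_deriv
        (by ring)
    have dY : HasDerivAt (fun s => Real.cos s * y q - Real.sin s * x q)
        (-(Real.cos s * x q + Real.sin s * y q)) s :=
      (((Real.hasDerivAt_cos s).mul_const _).sub ((Real.hasDerivAt_sin s).mul_const _)).congr_deriv
        (by ring)
    exact ((dX.pow k).mul dY).congr_deriv (by simp only [Pi.pow_apply]; ring)

theorem integral_re_pow_succ (k : ℕ) :
    (k + 3) * ∫ q : Metric.sphere (0 : ℍ[ℝ]) 1, (q : ℍ[ℝ]).re ^ (k + 1) ∂muH =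
      k * ∫ q : Metric.sphere (0 : ℍ[ℝ]) 1, (q : ℍ[ℝ]).re ^ (k - 1) ∂muH := by
  obtain ⟨i, hi⟩ : ∃ i : ℍ[ℝ], i.re = 0 ∧ i.imI = 1 ∧ i.imJ = 0 ∧ i.imK = 0 :=
    ⟨⟨0, 1, 0, 0⟩, rfl, rfl, rfl, rfl⟩
  obtain ⟨j, hj⟩ : ∃ j : ℍ[ℝ], j.re = 0 ∧ j.imI = 0 ∧ j.imJ = 1 ∧ j.imK = 0 :=
    ⟨⟨0, 0, 1, 0⟩, rfl, rfl, rfl, rfl⟩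
  obtain ⟨l, hl⟩ : ∃ l : ℍ[ℝ], l.re = 0 ∧ l.imI = 0 ∧ l.imJ = 0 ∧ l.imK = 1 :=
    ⟨⟨0, 0, 0, 1⟩, rfl, rfl, rfl, rfl⟩
  have hI := integral_re_pow_mul_re_sq (u := i) (by ext <;> simp [hi]) hi.1 k
  have hJ := integral_re_pow_mul_re_sq (u := j) (by ext <;> simp [hj]) hj.1 k
  have hL := integral_re_pow_mul_re_sq (u := l) (by ext <;> simp [hl]) hl.1 k
  have hx : Continuous fun q : Metric.sphere (0 : ℍ[ℝ]) 1 => (q : ℍ[ℝ]).re :=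
    Quaternion.continuous_re.comp continuous_subtype_val
  have hint {φ : Metric.sphere (0 : ℍ[ℝ]) 1 → ℝ} (hφ : Continuous φ) : Integrable φ muH :=
    hφ.integrable_of_hasCompactSupport (HasCompactSupport.of_compactSpace φ)
  have hu (u : ℍ[ℝ]) : Integrable (fun q : Metric.sphere (0 : ℍ[ℝ]) 1 =>
      (q : ℍ[ℝ]).re ^ (k - 1) * (u * (q : ℍ[ℝ])).re ^ 2) muH :=
    hint ((hx.pow _).mul ((continuous_re_mul_coe u).pow 2))
  have hsum : (∫ q : Metric.sphere (0 : ℍ[ℝ]) 1, (q : ℍ[ℝ]).re ^ (k - 1) ∂muH) =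
      (∫ q : Metric.sphere (0 : ℍ[ℝ]) 1, (q : ℍ[ℝ]).re ^ (k - 1 + 2) ∂muH) +
      (∫ q : Metric.sphere (0 : ℍ[ℝ]) 1,
        (q : ℍ[ℝ]).re ^ (k - 1) * (i * (q : ℍ[ℝ])).re ^ 2 ∂muH) +
      (∫ q : Metric.sphere (0 : ℍ[ℝ]) 1,
        (q : ℍ[ℝ]).re ^ (k - 1) * (j * (q : ℍ[ℝ])).re ^ 2 ∂muH) +
      ∫ q : Metric.sphere (0 : ℍ[ℝ]) 1,
        (q : ℍ[ℝ]).re ^ (k - 1) * (l * (q : ℍ[ℝ])).re ^ 2 ∂muH := by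
    have h0 : Integrable (fun q : Metric.sphere (0 : ℍ[ℝ]) 1 => (q : ℍ[ℝ]).re ^ (k - 1 + 2)) muH :=
      hint (hx.pow (k - 1 + 2))
    have hpt (q : Metric.sphere (0 : ℍ[ℝ]) 1) : (q : ℍ[ℝ]).re ^ (k - 1) =
        (q : ℍ[ℝ]).re ^ (k - 1 + 2) + (q : ℍ[ℝ]).re ^ (k - 1) * (i * (q : ℍ[ℝ])).re ^ 2 +
        (q : ℍ[ℝ]).re ^ (k - 1) * (j * (q : ℍ[ℝ])).re ^ 2 +
        (q : ℍ[ℝ]).re ^ (k - 1) * (l * (q : ℍ[ℝ])).re ^ 2 := by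
      have hq : Quaternion.normSq (q : ℍ[ℝ]) = 1 := by
        rw [Quaternion.normSq_eq_norm_mul_self, norm_eq_of_mem_sphere, one_mul]
      rw [Quaternion.normSq_def'] at hq
      simp only [Quaternion.re_mul, hi, hj, hl]
      linear_combination -(q : ℍ[ℝ]).re ^ (k - 1) * hq
    rw [integral_congr_ae (.of_forall hpt),
      integral_add (by exact (h0.add (hu i)).add (hu j)) (hu l),
      integral_add (by exact h0.add (hu i)) (hu j), integral_add h0 (hu i)]
  rcases k with _ | k
  · simpa [eq_comm] using hI
  · simp only [Nat.add_sub_cancel] at *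
    push_cast at *
    linear_combination -hI - hJ - hL - (k + 1) * hsum

/-- Finite measures on `[-1, 1]` with equal moments coincide. -/
theorem measure_eq_of_moments_eq {P Q : Measure ℝ} [IsFiniteMeasure P] [IsFiniteMeasure Q]
    (hP : ∀ᵐ x ∂P, x ∈ Set.Icc (-1) 1) (hQ : ∀ᵐ x ∂Q, x ∈ Set.Icc (-1) 1)
    (h : ∀ k : ℕ, ∫ x, x ^ k ∂P = ∫ x, x ^ k ∂Q) : P = Q := by
  have hint {P : Measure ℝ} [IsFiniteMeasure P] (hP : ∀ᵐ x ∂P, x ∈ Set.Icc (-1) 1)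
      {φ : ℝ → ℝ} (hφ : Continuous φ) : Integrable φ P := by
    obtain ⟨C, hC⟩ := isCompact_Icc.exists_bound_of_continuousOn (s := Set.Icc (-1 : ℝ) 1)
      hφ.continuousOn
    exact .of_bound hφ.aestronglyMeasurable C (hP.mono hC)
  have hpoly (p : Polynomial ℝ) : ∫ x, p.eval x ∂P = ∫ x, p.eval x ∂Q := by
    simp only [Polynomial.eval_eq_sum_range]
    rw [integral_finsetSum _ fun i _ => (hint hP (continuous_pow i)).const_mul _,
      integral_finsetSum _ fun i _ => (hint hQ (continuous_pow i)).const_mul _]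
    simp only [integral_const_mul, h]
  refine ext_of_forall_integral_eq_of_IsFiniteMeasure fun φ => ?_
  have hnear {P : Measure ℝ} [IsFiniteMeasure P] (hP : ∀ᵐ x ∂P, x ∈ Set.Icc (-1) 1) {ε : ℝ}
      {p : Polynomial ℝ} (hp : ∀ x ∈ Set.Icc (-1 : ℝ) 1, |p.eval x - φ x| < ε) :
      |∫ x, p.eval x ∂P - ∫ x, φ x ∂P| ≤ ε * P.real Set.univ := by
    rw [← integral_sub (hint hP p.continuous) (hint hP φ.continuous)]
    refine norm_integral_le_of_norm_le_const (f := fun x => p.eval x - φ x) (hP.mono fun x hx => ?_)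
    exact (hp x hx).le
  refine eq_of_abs_sub_le_all fun δ hδ => ?_
  set K := P.real Set.univ + Q.real Set.univ + 1 with hK
  have hK0 : 0 < K := by positivity
  obtain ⟨p, hp⟩ := exists_polynomial_near_of_continuousOn (-1) 1 φ φ.continuous.continuousOn
    (δ / K) (by positivity)
  have h1 := hnear hP hp
  have h2 := hnear hQ hp
  rw [hpoly, abs_le] at h1
  rw [abs_le] at h2
  have h3 : δ / K * P.real Set.univ + δ / K * Q.real Set.univ ≤ δ := by
    rw [← mul_add, div_mul_eq_mul_div, div_le_iff₀ hK0]
    gcongr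
    linarith
  rw [abs_le]
  constructor <;> linarith

theorem sum_nthRootsFinset_sq {m : ℕ} (hm : 0 < m) :
    ∑ ζ ∈ Polynomial.nthRootsFinset m (1 : ℂ), ζ ^ 2 = if m ∣ 2 then (m : ℂ) else 0 := by
  have hω := Complex.isPrimitiveRoot_exp m hm.ne'
  set ω := Complex.exp (2 * Real.pi * Complex.I / m)
  have h1 : ∑ ζ ∈ Polynomial.nthRootsFinset m (1 : ℂ), ζ ^ 2 =
      ∑ i ∈ Finset.range m, (ω ^ 2) ^ i := by
    symm
    refine Finset.sum_bij (fun i _ => ω ^ i) (fun i _ => ?_) (fun i hi j hj h => ?_)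
      (fun ζ hζ => ?_) (fun i _ => by ring)
    · rw [Polynomial.mem_nthRootsFinset hm, ← pow_mul, mul_comm, pow_mul, hω.pow_eq_one, one_pow]
    · exact hω.pow_inj (Finset.mem_range.1 hi) (Finset.mem_range.1 hj) h
    · have : NeZero m := ⟨hm.ne'⟩
      obtain ⟨i, hi, rfl⟩ := hω.eq_pow_of_pow_eq_one ((Polynomial.mem_nthRootsFinset hm _).1 hζ)
      exact ⟨i, Finset.mem_range.2 hi, rfl⟩
  rw [h1]
  split_ifs with h
  · simp [(hω.pow_eq_one_iff_dvd 2).2 h]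
  · have h2 : ω ^ 2 ≠ 1 := fun h' => h ((hω.pow_eq_one_iff_dvd 2).1 h')
    rw [geom_sum_eq h2, ← pow_mul, mul_comm, pow_mul, hω.pow_eq_one]
    simp

/-- The value at `2` of the Ramanujan sum. -/
theorem sum_primitiveRoots_sq {n : ℕ} (hn : 0 < n) :
    ∑ ζ ∈ primitiveRoots n ℂ, ζ ^ 2 = ArithmeticFunction.moebius n +
      if 2 ∣ n then 2 * (ArithmeticFunction.moebius (n / 2) : ℂ) else 0 := by
  have key : ∀ m : ℕ, m > 0 → ∑ d ∈ m.divisors, ∑ ζ ∈ primitiveRoots d ℂ, ζ ^ 2 =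
      if m ∣ 2 then (m : ℂ) else 0 := by
    intro m hm
    rw [← sum_nthRootsFinset_sq hm, IsPrimitiveRoot.nthRoots_one_eq_biUnion_primitiveRoots,
      Finset.sum_biUnion fun i _ j _ hij => IsPrimitiveRoot.disjoint hij]
  have := (ArithmeticFunction.sum_eq_iff_sum_mul_moebius_eq.1 key) n hn
  rw [← this, Nat.sum_divisorsAntidiagonal' (f := fun a b =>
    (ArithmeticFunction.moebius a : ℂ) * if b ∣ 2 then (b : ℂ) else 0)]
  simp only [mul_ite, mul_zero]
  rw [← Finset.sum_filter]
  have hf : n.divisors.filter (· ∣ 2) = if 2 ∣ n then {1, 2} else {1} := by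
    ext d
    simp only [Finset.mem_filter, Nat.mem_divisors, Nat.dvd_prime Nat.prime_two]
    constructor
    · rintro ⟨⟨hd, -⟩, rfl | rfl⟩
      · split_ifs <;> simp
      · simp [hd]
    · split_ifs with h <;> simp <;> grind [one_dvd]
  rw [hf]
  split_ifs
  · rw [Finset.sum_pair (by norm_num)]; simp [mul_comm]
  · simp

open ArithmeticFunction in
theorem moebius_two_mul {m : ℕ} :
    moebius (2 * m) = if Odd m then - moebius m else 0 := by
  split_ifs with h
  · rw [isMultiplicative_moebius.map_mul_of_coprime (by simpa using h),
      moebius_apply_prime Nat.prime_two]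
    ring
  · apply moebius_eq_zero_of_not_squarefree
    rw [Nat.not_odd_iff_even] at h
    obtain ⟨k, rfl⟩ := h
    intro hs
    have := hs 2 ⟨k, by ring⟩
    simp at this

open Real in
theorem intervalIntegrable_log_two_mul_sin_half (a b : ℝ) :
    IntervalIntegrable (fun θ => log |2 * sin (θ / 2)|) volume a b := by
  simp only [log_abs]
  refine MeromorphicOn.intervalIntegrable_log (f := fun θ : ℝ => 2 * sin (θ / 2)) ?_
  intro x _
  have : AnalyticAt ℝ (fun θ : ℝ => 2 * sin (θ / 2)) x := by fun_prop
  exact this.meromorphicAt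

open Real in
theorem integral_log_two_mul_sin_half :
    ∫ θ in 0..2 * π, log |2 * sin (θ / 2)| = 0 := by
  have h := intervalIntegral.integral_comp_div (a := 0) (b := 2 * π)
    (fun u => log |2 * sin u|) (two_ne_zero' ℝ)
  rw [h, zero_div, mul_div_cancel_left₀ _ (two_ne_zero' ℝ), smul_eq_mul]
  have : ∫ u in 0..π, log |2 * sin u| = ∫ u in 0..π, (log 2 + log (sin u)) := by
    refine intervalIntegral.integral_congr_ae ?_
    filter_upwards [(measure_singleton π : volume {π} = 0) |> compl_mem_ae_iff.2] with u hu hu'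
    rw [Set.uIoc_of_le pi_pos.le] at hu'
    have := sin_pos_of_pos_of_lt_pi hu'.1 (lt_of_le_of_ne hu'.2 hu)
    rw [log_abs, log_mul two_ne_zero this.ne']
  rw [this, intervalIntegral.integral_add (g := fun u => log (sin u)) intervalIntegrable_const
    intervalIntegrable_log_sin, integral_log_sin_zero_pi]
  simp
  ring

open Real in
theorem integral_log_two_mul_sin_half_mul_cos :
    ∫ θ in 0..2 * π, log |2 * sin (θ / 2)| * cos (2 * θ) = - π / 2 := by
  have hcont : Continuous fun θ : ℝ => (2 * sin (θ / 2)) * log (2 * sin (θ / 2)) :=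
    continuous_mul_log.comp (by fun_prop : Continuous fun θ : ℝ => 2 * sin (θ / 2))
  have := intervalIntegral.integral_eq_sub_of_hasDerivAt_of_le (a := 0) (b := 2 * π)
    (f := fun θ => (2 * sin (θ / 2)) * log (2 * sin (θ / 2)) * (cos (θ / 2) * cos θ)
      - (sin θ / 2 + θ / 4 + sin (2 * θ) / 8))
    (f' := fun θ => log |2 * sin (θ / 2)| * cos (2 * θ)) (by positivity) ?_ ?_ ?_
  · have h4 : sin (2 * (2 * π)) = 0 := by
      rw [← mul_assoc]
      exact_mod_cast sin_nat_mul_pi 4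
    rw [this]
    norm_num [h4]
    ring
  · exact Continuous.continuousOn (by fun_prop)
  · rintro θ ⟨h0, h1⟩
    have hs : 0 < sin (θ / 2) := sin_pos_of_pos_of_lt_pi (by linarith) (by linarith)
    have d1 : HasDerivAt (fun θ => 2 * sin (θ / 2)) (cos (θ / 2)) θ := by
      have := ((hasDerivAt_id θ).div_const 2).sin.const_mul 2
      simpa [mul_comm] using this
    have d2 : HasDerivAt (fun θ => cos (θ / 2)) (- sin (θ / 2) / 2) θ := by
      have := ((hasDerivAt_id θ).div_const 2).cos
      simp at this; convert this using 1; ring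
    have d3 : HasDerivAt (fun θ => sin (2 * θ)) (2 * cos (2 * θ)) θ := by
      have := ((hasDerivAt_id θ).const_mul 2).sin
      simp at this; convert this using 1; ring
    have hx : 2 * sin (θ / 2) ≠ 0 := by positivity
    have d4 := ((hasDerivAt_mul_log hx).comp θ d1).mul (d2.mul (hasDerivAt_cos θ))
    have d5 := d4.sub ((((hasDerivAt_sin θ).div_const 2).add ((hasDerivAt_id θ).div_const 4)).add
      (d3.div_const 8))
    refine d5.congr_deriv ?_
    have e1 : cos θ = 2 * cos (θ / 2) ^ 2 - 1 := by rw [← cos_two_mul]; ring_nf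
    have e2 : sin θ = 2 * sin (θ / 2) * cos (θ / 2) := by rw [← sin_two_mul]; ring_nf
    have e3 := sin_sq (θ / 2)
    simp only [Function.comp_apply, Pi.mul_apply, log_abs, cos_two_mul θ, e1, e2]
    linear_combination log (2 * sin (θ / 2)) * (1 - 6 * cos (θ / 2) ^ 2) * e3
  · exact (intervalIntegrable_log_two_mul_sin_half _ _).mul_continuousOn
      (Continuous.continuousOn (by fun_prop))

open Real in
theorem ae_two_cos_sub_ne_zero (α : ℝ) : ∀ᵐ θ : ℝ, 2 * cos θ - 2 * cos α ≠ 0 := by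
  have : {θ : ℝ | cos α = cos θ}.Countable := by
    simp only [cos_eq_cos_iff]
    refine ((Set.countable_range fun k : ℤ => 2 * k * π + α).union
      (Set.countable_range fun k : ℤ => 2 * k * π - α)).mono ?_
    rintro θ ⟨k, h | h⟩
    · exact Or.inl ⟨k, h.symm⟩
    · exact Or.inr ⟨k, h.symm⟩
  filter_upwards [this.ae_notMem volume] with θ hθ h
  exact hθ (show cos α = cos θ by linarith)

open Real in
theorem integral_log_two_cos_sub_mul_sin_sq (α : ℝ) :
    IntervalIntegrable (fun θ => log |2 * cos θ - 2 * cos α| * sin θ ^ 2) volume 0 (2 * π) ∧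
    ∫ θ in 0..2 * π, log |2 * cos θ - 2 * cos α| * sin θ ^ 2 = π * cos (2 * α) / 2 := by
  set f : ℝ → ℝ := fun θ => log |2 * sin (θ / 2)| with hf
  have hper : Function.Periodic f (2 * π) := fun θ => by
    simp only [hf]
    rw [show (θ + 2 * π) / 2 = θ / 2 + π by ring, sin_add_pi, mul_neg, abs_neg]
  have hfi := intervalIntegrable_log_two_mul_sin_half
  have hshift (β : ℝ) : ∫ θ in 0..2 * π, f (θ - β) * sin θ ^ 2 =
      ∫ θ in 0..2 * π, f θ * sin (θ + β) ^ 2 := by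
    have h1 : Function.Periodic (fun θ => f θ * sin (θ + β) ^ 2) (2 * π) := fun θ => by
      simp only [hper θ]
      rw [show θ + 2 * π + β = θ + β + 2 * π by ring, sin_add_two_pi]
    have h2 := intervalIntegral.integral_comp_sub_right (a := 0) (b := 2 * π)
      (fun θ => f θ * sin (θ + β) ^ 2) β
    simp only [sub_add_cancel] at h2
    rw [h2, show 2 * π - β = (0 - β) + 2 * π by ring, h1.intervalIntegral_add_eq (0 - β) 0,
      zero_add]
  have hi (β : ℝ) : IntervalIntegrable (fun θ => f (θ - β) * sin θ ^ 2) volume 0 (2 * π) := by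
    refine IntervalIntegrable.mul_continuousOn ?_ (Continuous.continuousOn (by fun_prop))
    have := (hfi (0 - β) (2 * π - β)).comp_sub_right β (by simp)
    rwa [sub_add_cancel, sub_add_cancel] at this
  have hi' (β : ℝ) : IntervalIntegrable (fun θ => f θ * sin (θ + β) ^ 2) volume 0 (2 * π) :=
    (hfi _ _).mul_continuousOn (Continuous.continuousOn (by fun_prop))
  have hsplit : (fun θ => log |2 * cos θ - 2 * cos α| * sin θ ^ 2) =ᵐ[volume]
      fun θ => f (θ - α) * sin θ ^ 2 + f (θ - -α) * sin θ ^ 2 := by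
    filter_upwards [ae_two_cos_sub_ne_zero α] with θ hθ
    have h := cos_sub_cos θ α
    have h1 : 2 * cos θ - 2 * cos α = -((2 * sin ((θ - α) / 2)) * (2 * sin ((θ + α) / 2))) := by
      linear_combination 2 * h
    rw [h1, neg_ne_zero, mul_ne_zero_iff] at hθ
    rw [h1, abs_neg, abs_mul, log_mul (abs_ne_zero.2 hθ.1) (abs_ne_zero.2 hθ.2), add_mul,
      sub_neg_eq_add]
  refine ⟨((hi α).add (hi (-α))).congr_ae (ae_restrict_of_ae hsplit.symm), ?_⟩
  rw [intervalIntegral.integral_congr_ae (hsplit.mono fun _ h _ => h),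
    intervalIntegral.integral_add (hi _) (hi _), hshift, hshift,
    ← intervalIntegral.integral_add (hi' _) (hi' _)]
  have : ∀ θ, f θ * sin (θ + α) ^ 2 + f θ * sin (θ + -α) ^ 2 =
      f θ - cos (2 * α) * (f θ * cos (2 * θ)) := fun θ => by
    rw [← mul_add, sin_add, sin_add, cos_neg, sin_neg, cos_two_mul, cos_two_mul]
    linear_combination (2 * f θ * cos α ^ 2) * sin_sq θ + 2 * f θ * cos θ ^ 2 * sin_sq α
  simp only [this]
  rw [intervalIntegral.integral_sub (hfi _ _), intervalIntegral.integral_const_mul,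
    integral_log_two_mul_sin_half, integral_log_two_mul_sin_half_mul_cos]
  · ring
  · exact ((hfi _ _).mul_continuousOn (Continuous.continuousOn (by fun_prop))).const_mul _

open Real in
theorem integral_cos_pow_mul_sin_sq_succ (k : ℕ) :
    (k + 3) * ∫ θ in 0..2 * π, cos θ ^ (k + 1) * sin θ ^ 2 =
      k * ∫ θ in 0..2 * π, cos θ ^ (k - 1) * sin θ ^ 2 := by
  have hd (θ : ℝ) : HasDerivAt (fun θ => cos θ ^ k * sin θ ^ 3)
      ((k + 3) * (cos θ ^ (k + 1) * sin θ ^ 2) - k * (cos θ ^ (k - 1) * sin θ ^ 2)) θ := by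
    refine (((hasDerivAt_cos θ).pow k).mul ((hasDerivAt_sin θ).pow 3)).congr_deriv ?_
    rcases k with _ | k
    · simp
      ring
    · simp only [Nat.add_sub_cancel, Pi.pow_apply]
      push_cast
      linear_combination (-(k + 1) * cos θ ^ k * sin θ ^ 2) * sin_sq_add_cos_sq θ
  have h := intervalIntegral.integral_eq_sub_of_hasDerivAt (a := 0) (b := 2 * π)
    (fun θ _ => hd θ) (Continuous.intervalIntegrable (by fun_prop) _ _)
  rw [intervalIntegral.integral_sub (Continuous.intervalIntegrable (by fun_prop) _ _)
    (Continuous.intervalIntegrable (by fun_prop) _ _), intervalIntegral.integral_const_mul,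
    intervalIntegral.integral_const_mul] at h
  simp only [sin_zero, sin_two_pi] at h
  linarith

open Real in
theorem integral_re_pow (k : ℕ) :
    ∫ q : Metric.sphere (0 : ℍ[ℝ]) 1, (q : ℍ[ℝ]).re ^ k ∂muH =
      (∫ θ in 0..2 * π, cos θ ^ k * sin θ ^ 2) / π := by
  induction k using Nat.strong_induction_on with
  | _ k ih =>
    rcases k with _ | k
    · simp [integral_sin_sq]
    · have h1 := integral_re_pow_succ k
      have h2 := integral_cos_pow_mul_sin_sq_succ k
      rw [ih (k - 1) (by omega)] at h1
      have hk : (k + 3 : ℝ) ≠ 0 := by positivity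
      refine mul_left_cancel₀ hk (h1.trans ?_)
      rw [← mul_div_assoc, ← mul_div_assoc, h2]

/-- The real part of a Haar-distributed unit quaternion follows the semicircle law. -/
theorem integral_comp_re {h : ℝ → ℝ} (hm : Measurable h) :
    ∫ q : Metric.sphere (0 : ℍ[ℝ]) 1, h (q : ℍ[ℝ]).re ∂muH =
      (∫ θ in 0..2 * Real.pi, h (Real.cos θ) * Real.sin θ ^ 2) / Real.pi := by
  let w : ℝ → NNReal := fun θ => (Real.sin θ ^ 2 / Real.pi).toNNReal
  have hw : Measurable w := by fun_prop
  let ρ : Measure ℝ := (volume.restrict (Set.Ioc 0 (2 * Real.pi))).withDensity fun θ => w θ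
  have hρ (g : ℝ → ℝ) : ∫ θ, g θ ∂ρ = (∫ θ in 0..2 * Real.pi, g θ * Real.sin θ ^ 2) / Real.pi := by
    rw [integral_withDensity_eq_integral_smul hw, intervalIntegral.integral_of_le (by positivity),
      ← integral_div]
    refine integral_congr_ae (.of_forall fun θ => ?_)
    simp only [w, NNReal.smul_def, smul_eq_mul]
    rw [Real.coe_toNNReal _ (by positivity)]
    ring
  have : IsFiniteMeasure ρ := isFiniteMeasure_withDensity (by
    refine ne_of_lt (lt_of_le_of_lt (b := ∫⁻ θ in Set.Ioc 0 (2 * Real.pi), 1) ?_ ?_)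
    · refine lintegral_mono fun θ => ?_
      simp only [w]
      exact_mod_cast Real.toNNReal_le_one.2 ((div_le_one Real.pi_pos).2
        ((Real.sin_sq_le_one θ).trans (by linarith [Real.pi_gt_three])))
    · rw [setLIntegral_one]
      exact measure_Ioc_lt_top)
  have hre : Measurable fun q : Metric.sphere (0 : ℍ[ℝ]) 1 => (q : ℍ[ℝ]).re :=
    (Quaternion.continuous_re.comp continuous_subtype_val).measurable
  have hcos : Measurable Real.cos := Real.measurable_cos
  have := Measure.isFiniteMeasure_map ρ Real.cos
  have := Measure.isFiniteMeasure_map muH fun q : Metric.sphere (0 : ℍ[ℝ]) 1 => (q : ℍ[ℝ]).re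
  have heq : muH.map (fun q : Metric.sphere (0 : ℍ[ℝ]) 1 => (q : ℍ[ℝ]).re) = ρ.map Real.cos := by
    refine measure_eq_of_moments_eq ?_ ?_ fun k => ?_
    · refine (ae_map_iff hre.aemeasurable measurableSet_Icc).2 ?_
      exact .of_forall fun q => abs_le.1 ((abs_re_le_norm _).trans_eq (norm_eq_of_mem_sphere q))
    · refine (ae_map_iff hcos.aemeasurable measurableSet_Icc).2 ?_
      exact .of_forall fun θ => Real.cos_mem_Icc θ
    · rw [integral_map hre.aemeasurable (by fun_prop), integral_map hcos.aemeasurable (by fun_prop),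
        hρ, integral_re_pow]
  rw [← integral_map (φ := fun q : Metric.sphere (0 : ℍ[ℝ]) 1 => (q : ℍ[ℝ]).re) (f := h)
    hre.aemeasurable hm.aestronglyMeasurable, heq,
    integral_map hcos.aemeasurable hm.aestronglyMeasurable, hρ]

open Polynomial in
theorem cyclotomic_sq_eq_prod (n : ℕ) (hn : 0 < n) :
    cyclotomic n ℝ ^ 2 = ∏ ζ ∈ primitiveRoots n ℂ, (X ^ 2 - C (2 * ζ.re) * X + 1) := by
  apply map_injective (algebraMap ℝ ℂ) (algebraMap ℝ ℂ).injective
  have h1 : cyclotomic n ℂ = ∏ ζ ∈ primitiveRoots n ℂ, (X - C ζ) :=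
    cyclotomic_eq_prod_X_sub_primitiveRoots (Complex.isPrimitiveRoot_exp n hn.ne')
  have h2 : cyclotomic n ℂ = ∏ ζ ∈ primitiveRoots n ℂ, (X - C ((starRingEnd ℂ) ζ)) := by
    conv_lhs => rw [← map_cyclotomic n (starRingEnd ℂ), h1]
    rw [Polynomial.map_prod]
    simp
  rw [Polynomial.map_pow, map_cyclotomic, Polynomial.map_prod, sq]
  nth_rw 1 [h1]
  rw [h2, ← Finset.prod_mul_distrib]
  refine Finset.prod_congr rfl fun ζ hζ => ?_
  have hζ1 : ‖ζ‖ = 1 := ((mem_primitiveRoots hn).1 hζ).norm'_eq_one hn.ne'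
  have e1 : ζ * (starRingEnd ℂ) ζ = 1 := by
    rw [Complex.mul_conj, Complex.normSq_eq_norm_sq, hζ1]; simp
  have e2 : ζ + (starRingEnd ℂ) ζ = ((2 * ζ.re : ℝ) : ℂ) := by
    rw [Complex.add_conj]
  have : (X - C ζ) * (X - C ((starRingEnd ℂ) ζ)) =
      X ^ 2 - C (ζ + (starRingEnd ℂ) ζ) * X + C (ζ * (starRingEnd ℂ) ζ) := by
    simp only [C_add, C_mul]; ring
  rw [this, e1, e2]
  simp

open Polynomial in
theorem norm_aeval_cyclotomic_sq {n : ℕ} (hn : 0 < n) {q : ℍ[ℝ]} (hq : ‖q‖ = 1) :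
    ‖aeval q (cyclotomic n ℝ)‖ ^ 2 = ∏ ζ ∈ primitiveRoots n ℂ, |2 * q.re - 2 * ζ.re| := by
  have hstar : q * star q = 1 := by
    rw [Quaternion.self_mul_star, Quaternion.normSq_eq_norm_mul_self, hq]; simp
  have hadd : q + star q = ((2 * q.re : ℝ) : ℍ[ℝ]) := by
    rw [Quaternion.self_add_star']
  have hfac (c : ℝ) : q ^ 2 - ((2 * c : ℝ) : ℍ[ℝ]) * q + 1 =
      q * ((2 * q.re - 2 * c : ℝ) : ℍ[ℝ]) := by
    rw [Quaternion.coe_sub, ← hadd, mul_sub, mul_add, hstar, sq,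
      ← (Quaternion.coe_commutes (2 * c) q)]
    abel
  have hprod (s : Finset ℂ) : ‖aeval q (∏ ζ ∈ s, (X ^ 2 - C (2 * ζ.re) * X + 1))‖ =
      ∏ ζ ∈ s, |2 * q.re - 2 * ζ.re| := by
    induction s using Finset.cons_induction with
    | empty => simp
    | cons ζ s h ih =>
      rw [Finset.prod_cons, Finset.prod_cons, map_mul, norm_mul, ih]
      congr 1
      have : aeval q (X ^ 2 - C (2 * ζ.re) * X + 1) =
          q ^ 2 - ((2 * ζ.re : ℝ) : ℍ[ℝ]) * q + 1 := by
        rw [map_add, map_sub, map_mul, map_pow, aeval_X, aeval_C, map_one]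
        rfl
      rw [this, hfac, norm_mul, hq, one_mul, Quaternion.norm_coe, Real.norm_eq_abs]
  rw [← norm_pow, ← map_pow, cyclotomic_sq_eq_prod n hn, hprod]

theorem mahlerH_cyclotomic_eq_sum {n : ℕ} (hn : 0 < n) :
    mahlerH (fun q => Polynomial.aeval q (Polynomial.cyclotomic n ℝ)) =
      (∑ ζ ∈ primitiveRoots n ℂ, ζ ^ 2).re / 4 := by
  let S := primitiveRoots n ℂ
  let h : ℝ → ℝ := fun x => Real.log (∏ ζ ∈ S, |2 * x - 2 * ζ.re|) / 2
  have hm : Measurable h := by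
    refine (Real.measurable_log.comp ?_).div_const 2
    exact Continuous.measurable (by fun_prop)
  have h1 : mahlerH (fun q => Polynomial.aeval q (Polynomial.cyclotomic n ℝ)) =
      ∫ q : Metric.sphere (0 : ℍ[ℝ]) 1, h (q : ℍ[ℝ]).re ∂muH := by
    refine integral_congr_ae (.of_forall fun q => ?_)
    simp only [h, S]
    rw [← norm_aeval_cyclotomic_sq hn (norm_eq_of_mem_sphere q), Real.log_pow]
    push_cast
    ring
  have hnorm (ζ : ℂ) (hζ : ζ ∈ S) : ‖ζ‖ = 1 :=
    ((mem_primitiveRoots hn).1 hζ).norm'_eq_one hn.ne'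
  have hre (ζ : ℂ) (hζ : ζ ∈ S) : ζ.re = Real.cos ζ.arg := by
    rw [Complex.cos_arg (norm_ne_zero_iff.1 (by simp [hnorm ζ hζ])), hnorm ζ hζ, div_one]
  have hsq (ζ : ℂ) (hζ : ζ ∈ S) : (ζ ^ 2).re = Real.cos (2 * ζ.arg) := by
    have h2 := Complex.sq_norm_sub_sq_re ζ
    rw [Real.cos_two_mul, ← hre ζ hζ, sq, Complex.mul_re]
    rw [hnorm ζ hζ] at h2
    linear_combination h2
  have hae : ∀ᵐ θ : ℝ, ∀ ζ ∈ S, |2 * Real.cos θ - 2 * ζ.re| ≠ 0 := by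
    refine (Finset.eventually_all S).2 fun ζ hζ => ?_
    rw [hre ζ hζ]
    filter_upwards [ae_two_cos_sub_ne_zero ζ.arg] with θ hθ
    exact abs_ne_zero.2 hθ
  have hsplit : ∫ θ in 0..2 * Real.pi, h (Real.cos θ) * Real.sin θ ^ 2 =
      ∫ θ in 0..2 * Real.pi, ∑ ζ ∈ S,
        Real.log |2 * Real.cos θ - 2 * Real.cos ζ.arg| * Real.sin θ ^ 2 / 2 := by
    refine intervalIntegral.integral_congr_ae (hae.mono fun θ hθ _ => ?_)
    simp only [h]
    rw [Real.log_prod hθ, Finset.sum_div, Finset.sum_mul]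
    refine Finset.sum_congr rfl fun ζ hζ => ?_
    rw [hre ζ hζ]
    ring
  rw [h1, integral_comp_re hm, hsplit, intervalIntegral.integral_finsetSum fun ζ _ =>
    (integral_log_two_cos_sub_mul_sin_sq ζ.arg).1.div_const 2, Complex.re_sum, Finset.sum_div,
    Finset.sum_div]
  refine Finset.sum_congr rfl fun ζ hζ => ?_
  rw [intervalIntegral.integral_div, (integral_log_two_cos_sub_mul_sin_sq ζ.arg).2, hsq ζ hζ]
  field_simp
  ring

/-- the quaternionic Mahler measure of cyclotomic polynomials. -/
theorem mahlerH_cyclotomic (n : ℕ) (hn : 1 ≤ n) :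
    (Odd n →
      mahlerH (fun q => Polynomial.aeval q (Polynomial.cyclotomic n ℝ)) =
        ((ArithmeticFunction.moebius n : ℤ) : ℝ) / 4) ∧
    (n % 4 = 2 →
      mahlerH (fun q => Polynomial.aeval q (Polynomial.cyclotomic n ℝ)) =
        ((ArithmeticFunction.moebius (n / 2) : ℤ) : ℝ) / 4) ∧
    (4 ∣ n →
      mahlerH (fun q => Polynomial.aeval q (Polynomial.cyclotomic n ℝ)) =
        ((ArithmeticFunction.moebius (n / 2) : ℤ) : ℝ) / 2) := by
  have hn0 : 0 < n := hn
  have key : mahlerH (fun q => Polynomial.aeval q (Polynomial.cyclotomic n ℝ)) =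
      (ArithmeticFunction.moebius n +
        if 2 ∣ n then 2 * (ArithmeticFunction.moebius (n / 2) : ℝ) else 0) / 4 := by
    rw [mahlerH_cyclotomic_eq_sum hn0, sum_primitiveRoots_sq hn0]
    split_ifs <;> simp
  rw [key]
  refine ⟨fun h => ?_, fun h => ?_, fun h => ?_⟩
  · rw [if_neg (by rwa [← even_iff_two_dvd, Nat.not_even_iff_odd]), add_zero]
  · obtain ⟨m, rfl⟩ : 2 ∣ n := by omega
    rw [if_pos (dvd_mul_right 2 m), Nat.mul_div_cancel_left m two_pos, moebius_two_mul,
      if_pos (Nat.odd_iff.2 (by omega))]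
    push_cast
    ring
  · obtain ⟨m, rfl⟩ : 2 ∣ n := by omega
    rw [if_pos (dvd_mul_right 2 m), Nat.mul_div_cancel_left m two_pos, moebius_two_mul,
      if_neg (by rw [Nat.not_odd_iff]; omega)]
    push_cast
    ring
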